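/- Let z₁ < ⋯ < z_K (K ≥ 2) be a grid with Cramér projection Π_C, let η_C be the unique fixed point of Π_C T^π, and let η_π be a return distribution function satisfying the distributional Bellman equation T^π η_π = η_π. If η_π^{(x,a)} is supported on [z₁, z_K] for all (x,a) ∈ X×A, then ℓ̄₂²(η_C, η_π) ≤ (1/(1−γ)) · max_{1 ≤ i < K} (z_{i+1} − z_i). -/

import Mathlib

open MeasureTheory Filter Set

noncomputable section

/-- The cumulative distribution function of a measure on ℝ. -/
def cdfFn (ν : Measure ℝ) (y : ℝ) : ℝ := (ν (Set.Iic y)).toReal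

/-- The Cramér distance `ℓ₂` between two measures on ℝ. -/
def cramerDist (ν₁ ν₂ : Measure ℝ) : ℝ :=
  Real.sqrt (∫ x, (cdfFn ν₁ x - cdfFn ν₂ x) ^ 2)

/-- The hat functions associated with the grid `z 0 < z 1 < ⋯ < z (K-1)`. -/
def hatFn (K : ℕ) (z : ℕ → ℝ) (i : ℕ) (x : ℝ) : ℝ :=
  if i = 0 ∧ x ≤ z 0 then 1
  else if i = K - 1 ∧ z (K - 1) ≤ x then 1
  else if i + 1 < K ∧ z i ≤ x ∧ x ≤ z (i + 1) then (z (i + 1) - x) / (z (i + 1) - z i)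
  else if 0 < i ∧ z (i - 1) ≤ x ∧ x ≤ z i then (x - z (i - 1)) / (z i - z (i - 1))
  else 0

/-- The Cramér projection onto the grid `z 0 < z 1 < ⋯ < z (K-1)`. -/
def cramerProj (K : ℕ) (z : ℕ → ℝ) (ν : Measure ℝ) : Measure ℝ :=
  ∑ i ∈ Finset.range K, (ENNReal.ofReal (∫ w, hatFn K z i w ∂ν)) • Measure.dirac (z i)

/-- The distributional Bellman operator. -/
def bellmanOp {X A : Type} [Fintype X] [Fintype A] [MeasurableSpace X] [MeasurableSpace A]
    (γ : ℝ) (p : X × A → Measure (ℝ × X)) (pol : X → Measure A)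
    (η : X × A → Measure ℝ) (xa : X × A) : Measure ℝ :=
  (p xa).bind (fun rx' => ∑ a' : A, (pol rx'.2 {a'}) • (η (rx'.2, a')).map (fun t => rx'.1 + γ * t))

/-- The supremum-Cramér metric between return distribution functions. -/
def supCramer {X A : Type} [Fintype X] [Fintype A] (η μ : X × A → Measure ℝ) : ℝ :=
  ⨆ xa : X × A, cramerDist (η xa) (μ xa)

/-- Square-integrable tails of the CDF. -/
def sqIntTails (ν : Measure ℝ) : Prop :=
  IntegrableOn (fun x => (cdfFn ν x) ^ 2) (Set.Iic 0) ∧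
  IntegrableOn (fun x => (1 - cdfFn ν x) ^ 2) (Set.Ici 0)

/-!
On each cell `[z i, z (i + 1))` the CDF of `cramerProj K z ν` is constant, equal to the average
over the cell of the CDF `F` of `ν`. By Pythagoras, replacing `F` by its average increases the
squared `L²` distance on the cell to another CDF `G` by at most the cell length times the variance
of `G` on the cell. By Popoviciu's inequality this variance is at most `d ^ 2 / 4`, where
`d ∈ [0, 1]` is the increment of `G`, so the cell costs at most `δ d / 4` with `δ` the mesh of the
grid. The increments add up to at most `1`, and projecting costs at most `δ / 4` in total.

The Bellman operator contracts the squared Cramér distance by `γ`: the squared distance is jointly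
convex in the two measures (Jensen), and pushing forward along `t ↦ r + γ t` rescales it by `γ`.
At the fixed points, the largest squared distance `D` therefore satisfies `D ≤ γ D + δ / 4`.
-/

open ProbabilityTheory
open scoped ENNReal

section Cdf

variable {ν : Measure ℝ} {a b x : ℝ}

lemma cdfFn_nonneg (ν : Measure ℝ) (x : ℝ) : 0 ≤ cdfFn ν x :=
  ENNReal.toReal_nonneg

lemma cdfFn_le_one (ν : Measure ℝ) [IsProbabilityMeasure ν] (x : ℝ) : cdfFn ν x ≤ 1 :=
  measureReal_le_one

lemma monotone_cdfFn (ν : Measure ℝ) [IsFiniteMeasure ν] : Monotone (cdfFn ν) :=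
  fun _ _ h ↦ measureReal_mono (Iic_subset_Iic.2 h)

lemma cdfFn_eq_zero_of_lt (h : ν (Icc a b)ᶜ = 0) (hx : x < a) : cdfFn ν x = 0 := by
  have : ν (Iic x) = 0 := by
    refine measure_mono_null ?_ h
    exact fun y hy hy' ↦ hx.not_ge (hy'.1.trans hy)
  simp [cdfFn, this]

lemma cdfFn_eq_one_of_le [IsProbabilityMeasure ν] (h : ν (Icc a b)ᶜ = 0) (hx : b ≤ x) :
    cdfFn ν x = 1 := by
  have : ν (Iic x)ᶜ = 0 := by
    refine measure_mono_null ?_ h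
    exact fun y hy hy' ↦ hy (hy'.2.trans hx)
  simp [cdfFn, (prob_compl_eq_zero_iff measurableSet_Iic).1 this]

lemma memLp_cdfFn (ν : Measure ℝ) [IsFiniteMeasure ν] (q : ℝ≥0∞) (P : Measure ℝ)
    [IsFiniteMeasure P] : MemLp (cdfFn ν) q P := by
  refine .of_bound (monotone_cdfFn ν).measurable.aestronglyMeasurable (ν.real univ)
    (ae_of_all _ fun x ↦ ?_)
  rw [Real.norm_of_nonneg (cdfFn_nonneg ν x)]
  exact measureReal_mono (subset_univ _)

lemma measurable_sq_cdfFn_sub (μ ν : Measure ℝ) [IsFiniteMeasure μ] [IsFiniteMeasure ν] :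
    Measurable fun x ↦ (cdfFn μ x - cdfFn ν x) ^ 2 :=
  ((monotone_cdfFn μ).measurable.sub (monotone_cdfFn ν).measurable).pow_const 2

lemma integrableOn_sq_cdfFn_sub (μ ν : Measure ℝ) [IsFiniteMeasure μ] [IsFiniteMeasure ν]
    (a b : ℝ) : IntegrableOn (fun x ↦ (cdfFn μ x - cdfFn ν x) ^ 2) (Ioc a b) :=
  ((memLp_cdfFn μ 2 _).sub (memLp_cdfFn ν 2 _)).integrable_sq

lemma intervalIntegral_cdfFn (ν : Measure ℝ) [IsFiniteMeasure ν] (hab : a ≤ b) :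
    ∫ x in a..b, cdfFn ν x = ∫ w, max (b - max a w) 0 ∂ν := by
  have hS : MeasurableSet {q : ℝ × ℝ | q.2 ≤ q.1} := measurableSet_le measurable_snd measurable_fst
  have fubini : ∫⁻ x in Ico a b, ν (Iic x) = ∫⁻ w, volume.restrict (Ico a b) (Ici w) ∂ν :=
    (Measure.prod_apply hS).symm.trans (Measure.prod_apply_symm hS)
  have vol (w : ℝ) : volume.restrict (Ico a b) (Ici w) = ENNReal.ofReal (max (b - max a w) 0) := by
    rw [Measure.restrict_apply measurableSet_Ici, inter_comm, Ico_inter_Ici, Real.volume_Ico]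
    simp
  rw [intervalIntegral.integral_of_le hab, ← integral_Ico_eq_integral_Ioc,
    integral_eq_lintegral_of_nonneg_ae (f := fun w ↦ max (b - max a w) 0)
      (ae_of_all _ fun w ↦ le_max_right _ _) (by fun_prop),
    ← lintegral_congr vol, ← fubini]
  exact integral_toReal
    (Monotone.measurable fun _ _ h ↦ measure_mono (Iic_subset_Iic.2 h)).aemeasurable
    (ae_of_all _ fun _ ↦ measure_lt_top _ _)

end Cdf

section Ramp

variable {a b w : ℝ}

/-- The piecewise linear function equal to `1` on `(-∞, a]` and to `0` on `[b, ∞)`. The partial sums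
of the hat functions of a grid are ramps over its cells. -/
def ramp (a b w : ℝ) : ℝ := max (b - max a w) 0 / (b - a)

lemma ramp_of_le_left (hab : a < b) (hw : w ≤ a) : ramp a b w = 1 := by
  rw [ramp, max_eq_left hw, max_eq_left (sub_pos.2 hab).le, div_self (sub_pos.2 hab).ne']

lemma ramp_of_mem_Icc (hw : w ∈ Icc a b) : ramp a b w = (b - w) / (b - a) := by
  rw [ramp, max_eq_right hw.1, max_eq_left (sub_nonneg.2 hw.2)]

lemma ramp_of_right_le (hw : b ≤ w) : ramp a b w = 0 := by
  rw [ramp, max_eq_right (sub_nonpos.2 (hw.trans (le_max_right a w))), zero_div]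

lemma integral_ramp (ν : Measure ℝ) [IsFiniteMeasure ν] (hab : a ≤ b) :
    ∫ w, ramp a b w ∂ν = ⨍ x in a..b, cdfFn ν x := by
  simp only [ramp]
  rw [interval_average_eq_div, intervalIntegral_cdfFn ν hab, integral_div]

end Ramp

section CramerProj

variable {K : ℕ} {z : ℕ → ℝ}

lemma hatFn_mem_Icc (K : ℕ) (z : ℕ → ℝ) (i : ℕ) (w : ℝ) : hatFn K z i w ∈ Icc 0 1 := by
  unfold hatFn
  split_ifs with _ _ hr hl
  · simp
  · simp
  · exact ⟨div_nonneg (by linarith) (by linarith), div_le_one_of_le₀ (by linarith) (by linarith)⟩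
  · exact ⟨div_nonneg (by linarith) (by linarith), div_le_one_of_le₀ (by linarith) (by linarith)⟩
  · simp

lemma measurable_hatFn (K : ℕ) (z : ℕ → ℝ) (i : ℕ) : Measurable (hatFn K z i) := by
  refine .ite ((MeasurableSet.const _).inter measurableSet_Iic) (by fun_prop)
    (.ite ((MeasurableSet.const _).inter measurableSet_Ici) (by fun_prop)
    (.ite ((MeasurableSet.const _).inter (measurableSet_Ici.inter measurableSet_Iic)) (by fun_prop)
    (.ite ((MeasurableSet.const _).inter (measurableSet_Ici.inter measurableSet_Iic)) (by fun_prop)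
    (by fun_prop))))

lemma integrable_hatFn (K : ℕ) (z : ℕ → ℝ) (i : ℕ) (ν : Measure ℝ) [IsFiniteMeasure ν] :
    Integrable (hatFn K z i) ν := by
  refine .of_bound (measurable_hatFn K z i).aestronglyMeasurable 1 (ae_of_all _ fun w ↦ ?_)
  rw [Real.norm_of_nonneg (hatFn_mem_Icc K z i w).1]
  exact (hatFn_mem_Icc K z i w).2

lemma hatFn_zero (hK : 1 < K) (hz : z 0 < z 1) (w : ℝ) : hatFn K z 0 w = ramp (z 0) (z 1) w := by
  have hlast : ¬ 0 = K - 1 := by omega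
  rcases le_or_gt w (z 0) with h0 | h0
  · simp [hatFn, h0, ramp_of_le_left hz h0]
  rcases le_or_gt w (z 1) with h1 | h1
  · simp [hatFn, h0.not_ge, h0.le, h1, hK, hlast, ramp_of_mem_Icc ⟨h0.le, h1⟩]
  · simp [hatFn, h0.not_ge, h1.not_ge, hlast, ramp_of_right_le h1.le]

lemma hatFn_succ {i : ℕ} (hi : i + 2 < K) (h₁ : z i < z (i + 1)) (h₂ : z (i + 1) < z (i + 2))
    (w : ℝ) :
    hatFn K z (i + 1) w = ramp (z (i + 1)) (z (i + 2)) w - ramp (z i) (z (i + 1)) w := by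
  have hlast : ¬ i + 1 = K - 1 := by omega
  have hd : z (i + 1) - z i ≠ 0 := (sub_pos.2 h₁).ne'
  rcases le_or_gt (z (i + 1)) w with hw | hw
  · rw [ramp_of_right_le hw]
    rcases le_or_gt w (z (i + 2)) with hw' | hw'
    · simp [hatFn, hlast, hi, hw, hw', ramp_of_mem_Icc ⟨hw, hw'⟩]
    · simp [hatFn, hlast, hw'.not_ge, (h₂.trans hw').not_ge, ramp_of_right_le hw'.le]
  · rw [ramp_of_le_left h₂ hw.le]
    rcases le_or_gt (z i) w with hw' | hw'
    · rw [ramp_of_mem_Icc ⟨hw', hw.le⟩, one_sub_div hd, sub_sub_sub_cancel_left]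
      simp [hatFn, hlast, hw.not_ge, hw', hw.le]
    · simp [hatFn, hlast, hw.not_ge, hw'.not_ge, ramp_of_le_left h₁ hw'.le]

lemma hatFn_last {i : ℕ} (h : z i < z (i + 1)) (w : ℝ) :
    hatFn (i + 2) z (i + 1) w = 1 - ramp (z i) (z (i + 1)) w := by
  have hd : z (i + 1) - z i ≠ 0 := (sub_pos.2 h).ne'
  rcases le_or_gt (z (i + 1)) w with hw | hw
  · simp [hatFn, hw, ramp_of_right_le hw]
  rcases le_or_gt (z i) w with hw' | hw'
  · rw [ramp_of_mem_Icc ⟨hw', hw.le⟩, one_sub_div hd, sub_sub_sub_cancel_left]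
    simp [hatFn, hw.not_ge, hw', hw.le]
  · simp [hatFn, hw.not_ge, hw'.not_ge, ramp_of_le_left h hw'.le]

lemma sum_hatFn_range_succ (hz : StrictMonoOn z (Iio K)) (w : ℝ) {i : ℕ} (hi : i + 1 < K) :
    ∑ j ∈ Finset.range (i + 1), hatFn K z j w = ramp (z i) (z (i + 1)) w := by
  induction i with
  | zero => simpa using hatFn_zero hi (hz (mem_Iio.2 (by omega)) hi one_pos) w
  | succ i ih =>
    rw [Finset.sum_range_succ, ih (by omega), hatFn_succ hi]
    · exact add_sub_cancel _ _
    all_goals exact hz (mem_Iio.2 (by omega)) (mem_Iio.2 (by omega)) (by omega)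

lemma sum_hatFn_eq_one (hK : 2 ≤ K) (hz : StrictMonoOn z (Iio K)) (w : ℝ) :
    ∑ j ∈ Finset.range K, hatFn K z j w = 1 := by
  obtain ⟨n, rfl⟩ := Nat.exists_eq_add_of_le' hK
  rw [Finset.sum_range_succ, sum_hatFn_range_succ hz w (by omega),
    hatFn_last (hz (by simp) (by simp) (by omega)), add_sub_cancel]

instance isFiniteMeasure_cramerProj (ν : Measure ℝ) : IsFiniteMeasure (cramerProj K z ν) := by
  constructor
  simp [cramerProj, ENNReal.sum_lt_top]

lemma cdfFn_cramerProj (K : ℕ) (z : ℕ → ℝ) (ν : Measure ℝ) (x : ℝ) :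
    cdfFn (cramerProj K z ν) x =
      ∑ i ∈ Finset.range K with z i ≤ x, ∫ w, hatFn K z i w ∂ν := by
  have hpos (i : ℕ) : 0 ≤ ∫ w, hatFn K z i w ∂ν :=
    integral_nonneg fun w ↦ (hatFn_mem_Icc K z i w).1
  have hmass : cramerProj K z ν (Iic x) =
      ∑ i ∈ Finset.range K with z i ≤ x, ENNReal.ofReal (∫ w, hatFn K z i w ∂ν) := by
    simp [cramerProj, Finset.sum_filter, indicator_apply]
  rw [cdfFn, hmass, ENNReal.toReal_sum (fun _ _ ↦ ENNReal.ofReal_ne_top)]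
  exact Finset.sum_congr rfl fun i _ ↦ ENNReal.toReal_ofReal (hpos i)

lemma cdfFn_cramerProj_of_lt (hz : MonotoneOn z (Iio K)) (ν : Measure ℝ) {x : ℝ} (hx : x < z 0) :
    cdfFn (cramerProj K z ν) x = 0 := by
  rw [cdfFn_cramerProj, Finset.filter_false_of_mem, Finset.sum_empty]
  intro i hi
  have hiK : i < K := Finset.mem_range.1 hi
  exact (hx.trans_le (hz (i.zero_le.trans_lt hiK) hiK i.zero_le)).not_ge

lemma cdfFn_cramerProj_of_le (hK : 2 ≤ K) (hz : StrictMonoOn z (Iio K)) (ν : Measure ℝ)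
    [IsProbabilityMeasure ν] {x : ℝ} (hx : z (K - 1) ≤ x) : cdfFn (cramerProj K z ν) x = 1 := by
  rw [cdfFn_cramerProj, Finset.filter_true_of_mem,
    ← integral_finsetSum _ fun i _ ↦ integrable_hatFn K z i ν]
  · simp [sum_hatFn_eq_one hK hz]
  intro i hi
  have hiK : i < K := Finset.mem_range.1 hi
  exact (hz.monotoneOn hiK (mem_Iio.2 (by omega)) (by omega)).trans hx

lemma cdfFn_cramerProj_of_mem_Ico (hz : StrictMonoOn z (Iio K)) (ν : Measure ℝ)
    [IsFiniteMeasure ν] {i : ℕ} (hi : i + 1 < K) {x : ℝ} (hx : x ∈ Ico (z i) (z (i + 1))) :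
    cdfFn (cramerProj K z ν) x = ⨍ t in (z i)..(z (i + 1)), cdfFn ν t := by
  have hlower : {j ∈ Finset.range K | z j ≤ x} = Finset.range (i + 1) := by
    ext j
    simp only [Finset.mem_filter, Finset.mem_range]
    refine ⟨fun h ↦ ?_, fun h ↦ ⟨by omega, ?_⟩⟩
    · exact (hz.lt_iff_lt h.1 hi).1 (h.2.trans_lt hx.2)
    · exact ((hz.le_iff_le (show j < K by omega) (show i < K by omega)).2 (by omega)).trans hx.1
  rw [cdfFn_cramerProj, hlower, ← integral_finsetSum _ fun j _ ↦ integrable_hatFn K z j ν,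
    ← integral_ramp ν (hz (show i < K by omega) hi i.lt_succ_self).le]
  simp only [sum_hatFn_range_succ hz _ hi]

end CramerProj

section Variance

variable {Ω : Type*} [MeasurableSpace Ω] {P : Measure Ω} [IsProbabilityMeasure P] {f g : Ω → ℝ}

lemma integral_sq_const_sub (hf : MemLp f 2 P) (c : ℝ) :
    ∫ ω, (c - f ω) ^ 2 ∂P = Var[f; P] + (c - ∫ ω, f ω ∂P) ^ 2 := by
  have hvar := variance_eq_sub ((memLp_const c).sub hf)
  rw [show (fun _ ↦ c) - f = fun ω ↦ c - f ω from rfl,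
    variance_const_sub hf.aestronglyMeasurable, integral_sub (integrable_const c)
    (hf.integrable one_le_two), integral_const, probReal_univ, one_smul] at hvar
  simp only [Pi.pow_apply] at hvar
  linarith

lemma sq_integral_le_integral_sq (hf : MemLp f 2 P) : (∫ ω, f ω ∂P) ^ 2 ≤ ∫ ω, f ω ^ 2 ∂P :=
  sub_nonneg.1 ((variance_nonneg f P).trans_eq (variance_eq_sub hf))

lemma integral_sq_integral_sub_le {m M : ℝ} (hf : MemLp f 2 P) (hg : MemLp g 2 P)
    (hfm : ∀ᵐ ω ∂P, f ω ∈ Icc m M) :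
    ∫ ω, ((∫ ω', g ω' ∂P) - f ω) ^ 2 ∂P ≤ ∫ ω, (g ω - f ω) ^ 2 ∂P + ((M - m) / 2) ^ 2 := by
  have popoviciu : Var[f; P] ≤ ((M - m) / 2) ^ 2 :=
    variance_le_sq_of_bounded hfm hf.aestronglyMeasurable.aemeasurable
  have jensen : (∫ ω, g ω ∂P - ∫ ω, f ω ∂P) ^ 2 ≤ ∫ ω, (g ω - f ω) ^ 2 ∂P := by
    rw [← integral_sub (hg.integrable one_le_two) (hf.integrable one_le_two)]
    exact sq_integral_le_integral_sq (hg.sub hf)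
  rw [integral_sq_const_sub hf]
  linarith

end Variance

lemma intervalIntegral_sq_average_sub_le {F G : ℝ → ℝ} {a b : ℝ} (hF : Monotone F)
    (hG : MemLp G 2 (volume.restrict (Ioc a b))) (hab : a < b) :
    ∫ x in a..b, ((⨍ t in a..b, G t) - F x) ^ 2 ≤
      (∫ x in a..b, (G x - F x) ^ 2) + (b - a) * ((F b - F a) / 2) ^ 2 := by
  set U := volume.restrict (Ioc a b)
  set P := (U univ)⁻¹ • U
  have hU : U univ ≠ 0 := by simp [U, hab]
  have : NeZero U := ⟨fun h ↦ hU (by simp [h])⟩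
  have average_eq (H : ℝ → ℝ) : ⨍ x in a..b, H x = ∫ x, H x ∂P := by rw [uIoc_of_le hab.le]; rfl
  have integral_eq (H : ℝ → ℝ) : ∫ x in a..b, H x = (b - a) * ∫ x, H x ∂P := by
    rw [← average_eq, interval_average_eq_div, mul_div_cancel₀ _ (sub_pos.2 hab).ne']
  have hFmem : ∀ᵐ x ∂P, F x ∈ Icc (F a) (F b) := by
    refine Measure.ae_smul_measure ?_ _
    filter_upwards [ae_restrict_mem measurableSet_Ioc] with x hx using ⟨hF hx.1.le, hF hx.2⟩
  have hFL : MemLp F 2 P := memLp_of_bounded hFmem hF.measurable.aestronglyMeasurable 2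
  have hGL : MemLp G 2 P := hG.smul_measure (ENNReal.inv_ne_top.2 hU)
  rw [average_eq, integral_eq, integral_eq, ← mul_add]
  exact mul_le_mul_of_nonneg_left (integral_sq_integral_sub_le hFL hGL hFmem) (sub_pos.2 hab).le

section SqDist

variable {μ ν : Measure ℝ} {a b : ℝ}

/-- The square of the Cramér distance as an extended nonnegative real. Unlike `cramerDist`, it is
`∞` rather than `0` when the squared difference of the two CDFs is not integrable. -/
def cramerSqDist (μ ν : Measure ℝ) : ℝ≥0∞ :=
  ∫⁻ x, ENNReal.ofReal ((cdfFn μ x - cdfFn ν x) ^ 2)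

lemma cramerDist_sq (μ ν : Measure ℝ) [IsFiniteMeasure μ] [IsFiniteMeasure ν] :
    cramerDist μ ν ^ 2 = (cramerSqDist μ ν).toReal := by
  rw [cramerDist, Real.sq_sqrt (integral_nonneg fun x ↦ sq_nonneg _), cramerSqDist,
    integral_eq_lintegral_of_nonneg_ae (ae_of_all _ fun x ↦ sq_nonneg _)
      (measurable_sq_cdfFn_sub μ ν).aestronglyMeasurable]

lemma cramerSqDist_self (ν : Measure ℝ) : cramerSqDist ν ν = 0 := by
  simp [cramerSqDist]

lemma ofReal_intervalIntegral_sq_cdfFn_sub (μ ν : Measure ℝ) [IsFiniteMeasure μ]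
    [IsFiniteMeasure ν] (hab : a ≤ b) :
    ENNReal.ofReal (∫ x in a..b, (cdfFn μ x - cdfFn ν x) ^ 2) =
      ∫⁻ x in Ioc a b, ENNReal.ofReal ((cdfFn μ x - cdfFn ν x) ^ 2) := by
  rw [intervalIntegral.integral_of_le hab, ofReal_integral_eq_lintegral_ofReal
    (integrableOn_sq_cdfFn_sub μ ν a b) (ae_of_all _ fun x ↦ sq_nonneg _)]

lemma ofReal_intervalIntegral_le_cramerSqDist (μ ν : Measure ℝ) [IsFiniteMeasure μ]
    [IsFiniteMeasure ν] (hab : a ≤ b) :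
    ENNReal.ofReal (∫ x in a..b, (cdfFn μ x - cdfFn ν x) ^ 2) ≤ cramerSqDist μ ν :=
  (ofReal_intervalIntegral_sq_cdfFn_sub μ ν hab).trans_le (setLIntegral_le_lintegral _ _)

lemma cramerSqDist_eq_ofReal_intervalIntegral [IsFiniteMeasure μ] [IsFiniteMeasure ν]
    (hab : a ≤ b) (h : ∀ x ∉ Ico a b, cdfFn μ x = cdfFn ν x) :
    cramerSqDist μ ν = ENNReal.ofReal (∫ x in a..b, (cdfFn μ x - cdfFn ν x) ^ 2) := by
  rw [ofReal_intervalIntegral_sq_cdfFn_sub μ ν hab, ← restrict_Ico_eq_restrict_Ioc, cramerSqDist]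
  refine (setLIntegral_eq_of_support_subset fun x hx ↦ ?_).symm
  by_contra hx'
  exact hx (by simp [h x hx'])

end SqDist

section CramerProjError

variable {K : ℕ} {z : ℕ → ℝ}

lemma intervalIntegral_cell_sq_cdfFn_cramerProj_sub_le (hz : StrictMonoOn z (Iio K)) {δ : ℝ}
    (hδ : ∀ i, i + 1 < K → z (i + 1) - z i ≤ δ) (μ ν : Measure ℝ) [IsProbabilityMeasure μ]
    [IsFiniteMeasure ν] {i : ℕ} (hi : i + 1 < K) :
    ∫ x in (z i)..(z (i + 1)), (cdfFn (cramerProj K z ν) x - cdfFn μ x) ^ 2 ≤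
      (∫ x in (z i)..(z (i + 1)), (cdfFn ν x - cdfFn μ x) ^ 2) +
        δ / 4 * (cdfFn μ (z (i + 1)) - cdfFn μ (z i)) := by
  have hcell : z i < z (i + 1) := hz (show i < K by omega) hi i.lt_succ_self
  set d := cdfFn μ (z (i + 1)) - cdfFn μ (z i)
  have hd₀ : 0 ≤ d := sub_nonneg.2 (monotone_cdfFn μ hcell.le)
  have hd₁ : d ≤ 1 := by linarith [cdfFn_le_one μ (z (i + 1)), cdfFn_nonneg μ (z i)]
  have hconst : ∫ x in (z i)..(z (i + 1)), (cdfFn (cramerProj K z ν) x - cdfFn μ x) ^ 2 =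
      ∫ x in (z i)..(z (i + 1)), ((⨍ t in (z i)..(z (i + 1)), cdfFn ν t) - cdfFn μ x) ^ 2 := by
    refine intervalIntegral.integral_congr_Ioo_of_le hcell.le fun x hx ↦ ?_
    simp only [cdfFn_cramerProj_of_mem_Ico hz ν hi (Ioo_subset_Ico_self hx)]
  calc _ = _ := hconst
    _ ≤ (∫ x in (z i)..(z (i + 1)), (cdfFn ν x - cdfFn μ x) ^ 2) +
          (z (i + 1) - z i) * (d / 2) ^ 2 :=
        intervalIntegral_sq_average_sub_le (monotone_cdfFn μ) (memLp_cdfFn ν 2 _) hcell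
    _ ≤ (∫ x in (z i)..(z (i + 1)), (cdfFn ν x - cdfFn μ x) ^ 2) + δ * (d / 4) := by
        gcongr
        · exact (sub_pos.2 hcell).le.trans (hδ i hi)
        · exact hδ i hi
        · nlinarith
    _ = _ := by ring

lemma intervalIntegral_grid_sq_cdfFn_cramerProj_sub_le (hz : StrictMonoOn z (Iio K)) {δ : ℝ}
    (hδ : ∀ i, i + 1 < K → z (i + 1) - z i ≤ δ) (hδ₀ : 0 ≤ δ) (μ ν : Measure ℝ)
    [IsProbabilityMeasure μ] [IsFiniteMeasure ν] :
    ∫ x in (z 0)..(z (K - 1)), (cdfFn (cramerProj K z ν) x - cdfFn μ x) ^ 2 ≤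
      (∫ x in (z 0)..(z (K - 1)), (cdfFn ν x - cdfFn μ x) ^ 2) + δ / 4 := by
  have hint (ν' : Measure ℝ) [IsFiniteMeasure ν'] (i : ℕ) (_ : i < K - 1) :
      IntervalIntegrable (fun x ↦ (cdfFn ν' x - cdfFn μ x) ^ 2) volume (z i) (z (i + 1)) :=
    ⟨integrableOn_sq_cdfFn_sub ν' μ _ _, integrableOn_sq_cdfFn_sub ν' μ _ _⟩
  calc _ = ∑ i ∈ Finset.range (K - 1),
          ∫ x in (z i)..(z (i + 1)), (cdfFn (cramerProj K z ν) x - cdfFn μ x) ^ 2 :=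
        (intervalIntegral.sum_integral_adjacent_intervals (hint _)).symm
    _ ≤ ∑ i ∈ Finset.range (K - 1), ((∫ x in (z i)..(z (i + 1)), (cdfFn ν x - cdfFn μ x) ^ 2) +
          δ / 4 * (cdfFn μ (z (i + 1)) - cdfFn μ (z i))) :=
        Finset.sum_le_sum fun i hi ↦ intervalIntegral_cell_sq_cdfFn_cramerProj_sub_le hz hδ μ ν
          (by have := Finset.mem_range.1 hi; omega)
    _ = (∫ x in (z 0)..(z (K - 1)), (cdfFn ν x - cdfFn μ x) ^ 2) +
          δ / 4 * (cdfFn μ (z (K - 1)) - cdfFn μ (z 0)) := by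
        rw [Finset.sum_add_distrib, intervalIntegral.sum_integral_adjacent_intervals (hint _),
          ← Finset.mul_sum, Finset.sum_range_sub (fun i ↦ cdfFn μ (z i))]
    _ ≤ _ := by
        gcongr
        refine mul_le_of_le_one_right (by positivity) ?_
        linarith [cdfFn_le_one μ (z (K - 1)), cdfFn_nonneg μ (z 0)]

lemma cramerSqDist_cramerProj_eq (hK : 2 ≤ K) (hz : StrictMonoOn z (Iio K)) {μ ν : Measure ℝ}
    [IsProbabilityMeasure μ] [IsProbabilityMeasure ν] (hμ : μ (Icc (z 0) (z (K - 1)))ᶜ = 0) :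
    cramerSqDist (cramerProj K z ν) μ =
      ENNReal.ofReal (∫ x in (z 0)..(z (K - 1)), (cdfFn (cramerProj K z ν) x - cdfFn μ x) ^ 2) := by
  refine cramerSqDist_eq_ofReal_intervalIntegral
    (hz.monotoneOn (mem_Iio.2 (by omega)) (mem_Iio.2 (by omega)) (K - 1).zero_le) fun x hx ↦ ?_
  rcases lt_or_ge x (z 0) with h0 | h0
  · rw [cdfFn_cramerProj_of_lt hz.monotoneOn ν h0, cdfFn_eq_zero_of_lt hμ h0]
  · have hlast : z (K - 1) ≤ x := not_lt.1 fun h ↦ hx ⟨h0, h⟩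
    rw [cdfFn_cramerProj_of_le hK hz ν hlast, cdfFn_eq_one_of_le hμ hlast]

lemma cramerSqDist_cramerProj_ne_top (hK : 2 ≤ K) (hz : StrictMonoOn z (Iio K)) {μ ν : Measure ℝ}
    [IsProbabilityMeasure μ] [IsProbabilityMeasure ν] (hμ : μ (Icc (z 0) (z (K - 1)))ᶜ = 0) :
    cramerSqDist (cramerProj K z ν) μ ≠ ∞ :=
  cramerSqDist_cramerProj_eq hK hz (ν := ν) hμ ▸ ENNReal.ofReal_ne_top

lemma cramerSqDist_cramerProj_le (hK : 2 ≤ K) (hz : StrictMonoOn z (Iio K)) {δ : ℝ}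
    (hδ : ∀ i, i + 1 < K → z (i + 1) - z i ≤ δ) {μ ν : Measure ℝ}
    [IsProbabilityMeasure μ] [IsProbabilityMeasure ν] (hμ : μ (Icc (z 0) (z (K - 1)))ᶜ = 0) :
    cramerSqDist (cramerProj K z ν) μ ≤ cramerSqDist ν μ + ENNReal.ofReal (δ / 4) := by
  have hcell : z 0 < z 1 := hz (mem_Iio.2 (by omega)) (mem_Iio.2 (by omega)) one_pos
  have hδ₀ : 0 ≤ δ := (sub_pos.2 hcell).le.trans (hδ 0 (by omega))
  have hgrid : z 0 ≤ z (K - 1) :=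
    hz.monotoneOn (mem_Iio.2 (by omega)) (mem_Iio.2 (by omega)) (K - 1).zero_le
  calc _ = _ := cramerSqDist_cramerProj_eq hK hz hμ
    _ ≤ ENNReal.ofReal ((∫ x in (z 0)..(z (K - 1)), (cdfFn ν x - cdfFn μ x) ^ 2) + δ / 4) :=
        ENNReal.ofReal_le_ofReal (intervalIntegral_grid_sq_cdfFn_cramerProj_sub_le hz hδ hδ₀ μ ν)
    _ ≤ _ := ENNReal.ofReal_add_le
    _ ≤ _ := by gcongr; exact ofReal_intervalIntegral_le_cramerSqDist ν μ hgrid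

end CramerProjError

section Affine

variable {γ : ℝ}

lemma cdfFn_map_affine (hγ : 0 < γ) (r : ℝ) (ν : Measure ℝ) (x : ℝ) :
    cdfFn (ν.map fun t ↦ r + γ * t) (r + γ * x) = cdfFn ν x := by
  have hpre : (fun t ↦ r + γ * t) ⁻¹' Iic (r + γ * x) = Iic x := by
    ext t
    simp [hγ]
  rw [cdfFn, Measure.map_apply (by fun_prop) measurableSet_Iic, hpre, cdfFn]

lemma lintegral_eq_ofReal_mul_lintegral_affine (hγ : 0 < γ) (r : ℝ) (f : ℝ → ℝ≥0∞) :
    ∫⁻ x, f x = ENNReal.ofReal γ * ∫⁻ x, f (r + γ * x) := by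
  have hvol : ENNReal.ofReal γ • Measure.map (γ * ·) volume = volume := by
    simpa [abs_of_pos hγ] using Real.smul_map_volume_mul_left hγ.ne'
  rw [← lintegral_add_left_eq_self f r, ← hvol, lintegral_smul_measure, hvol,
    (measurableEmbedding_mulLeft₀ hγ.ne').lintegral_map, smul_eq_mul]

lemma cramerSqDist_map_affine (hγ : 0 ≤ γ) (r : ℝ) (μ ν : Measure ℝ) [IsProbabilityMeasure μ]
    [IsProbabilityMeasure ν] :
    cramerSqDist (μ.map fun t ↦ r + γ * t) (ν.map fun t ↦ r + γ * t) =
      ENNReal.ofReal γ * cramerSqDist μ ν := by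
  rcases hγ.eq_or_lt with rfl | hγ
  · simp [cramerSqDist_self]
  · rw [cramerSqDist, lintegral_eq_ofReal_mul_lintegral_affine hγ r, cramerSqDist]
    simp only [cdfFn_map_affine hγ]

end Affine

section Mixture

variable {Ω : Type*} [MeasurableSpace Ω]

lemma measurable_cdfFn_kernel (κ : Kernel Ω ℝ) [IsSFiniteKernel κ] :
    Measurable fun q : Ω × ℝ ↦ cdfFn (κ q.1) q.2 := by
  have hS : MeasurableSet {q : (Ω × ℝ) × ℝ | q.2 ≤ q.1.2} :=
    measurableSet_le measurable_snd (measurable_snd.comp measurable_fst)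
  exact (Kernel.measurable_kernel_prodMk_left
    (κ := κ.comap Prod.fst measurable_fst) hS).ennreal_toReal

lemma memLp_cdfFn_kernel (κ : Kernel Ω ℝ) [IsFiniteKernel κ] (x : ℝ) (q : ℝ≥0∞) (P : Measure Ω)
    [IsFiniteMeasure P] : MemLp (fun ω ↦ cdfFn (κ ω) x) q P := by
  refine .of_bound ((measurable_cdfFn_kernel κ).comp
    (measurable_id.prodMk measurable_const)).aestronglyMeasurable κ.bound.toReal
    (ae_of_all _ fun ω ↦ ?_)
  rw [Real.norm_of_nonneg (cdfFn_nonneg _ _)]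
  exact ENNReal.toReal_mono κ.bound_ne_top (κ.measure_le_bound ω _)

lemma cdfFn_bind_kernel (P : Measure Ω) (κ : Kernel Ω ℝ) [IsFiniteKernel κ] (x : ℝ) :
    cdfFn (P.bind κ) x = ∫ ω, cdfFn (κ ω) x ∂P := by
  rw [cdfFn, Measure.bind_apply measurableSet_Iic κ.measurable.aemeasurable]
  exact (integral_toReal (κ.measurable_coe measurableSet_Iic).aemeasurable
    (ae_of_all _ fun ω ↦ measure_lt_top _ _)).symm

lemma cramerSqDist_bind_kernel_le (P : Measure Ω) [IsProbabilityMeasure P] (κ₁ κ₂ : Kernel Ω ℝ)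
    [IsFiniteKernel κ₁] [IsFiniteKernel κ₂] :
    cramerSqDist (P.bind κ₁) (P.bind κ₂) ≤ ∫⁻ ω, cramerSqDist (κ₁ ω) (κ₂ ω) ∂P := by
  have hmeas : Measurable fun q : ℝ × Ω ↦
      ENNReal.ofReal ((cdfFn (κ₁ q.2) q.1 - cdfFn (κ₂ q.2) q.1) ^ 2) :=
    (((measurable_cdfFn_kernel κ₁).comp measurable_swap).sub
      ((measurable_cdfFn_kernel κ₂).comp measurable_swap)).pow_const 2 |>.ennreal_ofReal
  calc _ ≤ ∫⁻ x, ∫⁻ ω, ENNReal.ofReal ((cdfFn (κ₁ ω) x - cdfFn (κ₂ ω) x) ^ 2) ∂P := by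
        refine lintegral_mono fun x ↦ ?_
        have h₁ := memLp_cdfFn_kernel κ₁ x 2 P
        have h₂ := memLp_cdfFn_kernel κ₂ x 2 P
        have hsub : MemLp (fun ω ↦ cdfFn (κ₁ ω) x - cdfFn (κ₂ ω) x) 2 P := h₁.sub h₂
        rw [← ofReal_integral_eq_lintegral_ofReal hsub.integrable_sq
            (ae_of_all _ fun _ ↦ sq_nonneg _), cdfFn_bind_kernel, cdfFn_bind_kernel,
          ← integral_sub (h₁.integrable one_le_two) (h₂.integrable one_le_two)]
        exact ENNReal.ofReal_le_ofReal (sq_integral_le_integral_sq hsub)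
    _ = ∫⁻ ω, cramerSqDist (κ₁ ω) (κ₂ ω) ∂P := lintegral_lintegral_swap hmeas.aemeasurable

lemma exists_markovKernel_ae_eq {E : Type*} [MeasurableSpace E] [Nonempty E] {P : Measure Ω}
    {f : Ω → Measure E} (hf : AEMeasurable f P) (hprob : ∀ᵐ ω ∂P, IsProbabilityMeasure (f ω)) :
    ∃ κ : Kernel Ω E, IsMarkovKernel κ ∧ f =ᵐ[P] κ := by
  have hne : {ρ : Measure E | IsProbabilityMeasure ρ}.Nonempty :=
    ⟨_, Measure.dirac.isProbabilityMeasure (x := Classical.arbitrary E)⟩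
  obtain ⟨g, hg, hrange, hfg⟩ := hf.exists_ae_eq_range_subset hprob hne
  exact ⟨⟨g, hg⟩, ⟨fun ω ↦ hrange (mem_range_self ω)⟩, hfg⟩

lemma cramerSqDist_bind_le {P : Measure Ω} [IsProbabilityMeasure P] {f g : Ω → Measure ℝ}
    (hf : AEMeasurable f P) (hg : AEMeasurable g P)
    (hfprob : ∀ᵐ ω ∂P, IsProbabilityMeasure (f ω)) (hgprob : ∀ᵐ ω ∂P, IsProbabilityMeasure (g ω)) :
    cramerSqDist (P.bind f) (P.bind g) ≤ ∫⁻ ω, cramerSqDist (f ω) (g ω) ∂P := by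
  obtain ⟨κ₁, _, h₁⟩ := exists_markovKernel_ae_eq hf hfprob
  obtain ⟨κ₂, _, h₂⟩ := exists_markovKernel_ae_eq hg hgprob
  rw [Measure.bind_congr_right h₁, Measure.bind_congr_right h₂,
    lintegral_congr_ae (h₁.comp₂ cramerSqDist h₂)]
  exact cramerSqDist_bind_kernel_le P κ₁ κ₂

lemma isProbabilityMeasure_sum_smul {ι : Type*} [Fintype ι] {w : ι → ℝ≥0∞} (hw : ∑ i, w i = 1)
    (μ : ι → Measure Ω) [∀ i, IsProbabilityMeasure (μ i)] :
    IsProbabilityMeasure (∑ i, w i • μ i) :=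
  ⟨by simpa using hw⟩

lemma cramerSqDist_sum_smul_le {ι : Type*} [Fintype ι] {w : ι → ℝ≥0∞} (hw : ∑ i, w i = 1)
    (μ ν : ι → Measure ℝ) [∀ i, IsProbabilityMeasure (μ i)] [∀ i, IsProbabilityMeasure (ν i)] :
    cramerSqDist (∑ i, w i • μ i) (∑ i, w i • ν i) ≤ ∑ i, w i * cramerSqDist (μ i) (ν i) := by
  let _ : MeasurableSpace ι := ⊤
  have : IsProbabilityMeasure (∑ i, w i • Measure.dirac i) := isProbabilityMeasure_sum_smul hw _
  have hbind (ρ : ι → Measure ℝ) : (∑ i, w i • Measure.dirac i).bind ρ = ∑ i, w i • ρ i := by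
    ext s hs
    rw [Measure.bind_apply hs measurable_from_top.aemeasurable]
    simp
  simpa [hbind, lintegral_finsetSum_measure] using
    cramerSqDist_bind_le (P := ∑ i, w i • Measure.dirac i) (f := μ) (g := ν)
      measurable_from_top.aemeasurable measurable_from_top.aemeasurable
      (ae_of_all _ fun _ ↦ inferInstance) (ae_of_all _ fun _ ↦ inferInstance)

end Mixture

section BindProbability

lemma one_le_sum_singleton {A : Type*} [Fintype A] [MeasurableSpace A] (ρ : Measure A)
    [IsProbabilityMeasure ρ] : 1 ≤ ∑ a, ρ {a} := by
  have hunion : (univ : Set A) = ⋃ a ∈ Finset.univ, {a} := by ext; simp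
  rw [← measure_univ (μ := ρ), hunion]
  exact measure_biUnion_finset_le _ _

variable {Ω E : Type*} [MeasurableSpace Ω] [MeasurableSpace E] {P : Measure Ω} {f : Ω → Measure E}

-- `Measure.bind` is `0` on maps that are not a.e. measurable.
lemma aemeasurable_of_bind_ne_zero (h : P.bind f ≠ 0) : AEMeasurable f P := by
  by_contra hf
  exact h (by rw [Measure.bind, Measure.map_of_not_aemeasurable hf, Measure.join_zero])

lemma ae_isProbabilityMeasure_of_bind [IsProbabilityMeasure P] [IsProbabilityMeasure (P.bind f)]
    (hf : ∀ᵐ ω ∂P, 1 ≤ f ω univ) : ∀ᵐ ω ∂P, IsProbabilityMeasure (f ω) := by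
  have hmeas : AEMeasurable f P := aemeasurable_of_bind_ne_zero (IsProbabilityMeasure.ne_zero _)
  have hmass : ∫⁻ ω, f ω univ ∂P = 1 := by
    rw [← Measure.bind_apply .univ hmeas, measure_univ]
  filter_upwards [ae_eq_of_ae_le_of_lintegral_le hf (by simp)
    ((Measure.measurable_coe .univ).comp_aemeasurable hmeas) (by simp [hmass])] with ω h
  exact ⟨h.symm⟩

lemma isProbabilityMeasure_bind_of_ae [IsProbabilityMeasure P] (hmeas : AEMeasurable f P)
    (hf : ∀ᵐ ω ∂P, IsProbabilityMeasure (f ω)) : IsProbabilityMeasure (P.bind f) := by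
  constructor
  rw [Measure.bind_apply .univ hmeas, lintegral_congr_ae (hf.mono fun ω h ↦ h.measure_univ)]
  simp

end BindProbability

section BellmanTarget

variable {X A : Type*} [Fintype A] [MeasurableSpace A] {γ : ℝ} {pol : X → Measure A}
  {η η' : X × A → Measure ℝ}

/-- The distribution of `r + γ G` for `G` distributed as `η (x', a')` with `a'` drawn from
`pol x'`, given the transition `rx = (r, x')`. The operator `bellmanOp` averages it over the
transition kernel. -/
def bellmanTarget (γ : ℝ) (pol : X → Measure A) (η : X × A → Measure ℝ) (rx : ℝ × X) :
    Measure ℝ :=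
  ∑ a' : A, pol rx.2 {a'} • (η (rx.2, a')).map fun t ↦ rx.1 + γ * t

lemma bellmanTarget_univ [∀ xa, IsProbabilityMeasure (η xa)] (rx : ℝ × X) :
    bellmanTarget γ pol η rx univ = ∑ a', pol rx.2 {a'} := by
  have (r : ℝ) (xa) : IsProbabilityMeasure ((η xa).map fun t ↦ r + γ * t) :=
    Measure.isProbabilityMeasure_map (by fun_prop)
  simp [bellmanTarget]

lemma isProbabilityMeasure_bellmanTarget [∀ xa, IsProbabilityMeasure (η xa)] {rx : ℝ × X}
    (hrx : ∑ a', pol rx.2 {a'} = 1) : IsProbabilityMeasure (bellmanTarget γ pol η rx) :=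
  ⟨(bellmanTarget_univ rx).trans hrx⟩

lemma cramerSqDist_bellmanTarget_le (hγ : 0 ≤ γ) [∀ xa, IsProbabilityMeasure (η xa)]
    [∀ xa, IsProbabilityMeasure (η' xa)] {rx : ℝ × X} (hrx : ∑ a', pol rx.2 {a'} = 1) :
    cramerSqDist (bellmanTarget γ pol η rx) (bellmanTarget γ pol η' rx) ≤
      ENNReal.ofReal γ * ⨆ xa, cramerSqDist (η xa) (η' xa) := by
  have (η'' : X × A → Measure ℝ) [∀ xa, IsProbabilityMeasure (η'' xa)] (a' : A) :
      IsProbabilityMeasure ((η'' (rx.2, a')).map fun t ↦ rx.1 + γ * t) :=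
    Measure.isProbabilityMeasure_map (by fun_prop)
  calc _ ≤ ∑ a', pol rx.2 {a'} * cramerSqDist ((η (rx.2, a')).map fun t ↦ rx.1 + γ * t)
          ((η' (rx.2, a')).map fun t ↦ rx.1 + γ * t) := cramerSqDist_sum_smul_le hrx _ _
    _ ≤ ∑ a', pol rx.2 {a'} * (ENNReal.ofReal γ * ⨆ xa, cramerSqDist (η xa) (η' xa)) := by
        gcongr with a'
        rw [cramerSqDist_map_affine hγ]
        gcongr
        exact le_iSup (fun xa ↦ cramerSqDist (η xa) (η' xa)) (rx.2, a')
    _ = _ := by rw [← Finset.sum_mul, hrx, one_mul]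

end BellmanTarget

section Bellman

variable {X A : Type} [Fintype X] [Fintype A] [MeasurableSpace X] [MeasurableSpace A] {γ : ℝ}
  {p : X × A → Measure (ℝ × X)} {pol : X → Measure A} {η η' : X × A → Measure ℝ} {xa : X × A}

-- Singletons of `A` need not be measurable, so a priori the weights `pol x {a'}` could add up to
-- more than `1`.
lemma ae_sum_policy_eq_one [IsProbabilityMeasure (p xa)] [∀ x, IsProbabilityMeasure (pol x)]
    [∀ xa, IsProbabilityMeasure (η xa)] [h : IsProbabilityMeasure (bellmanOp γ p pol η xa)] :
    ∀ᵐ rx ∂p xa, ∑ a', pol rx.2 {a'} = 1 := by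
  have : IsProbabilityMeasure ((p xa).bind (bellmanTarget γ pol η)) := h
  have hone : ∀ᵐ rx ∂p xa, 1 ≤ bellmanTarget γ pol η rx univ :=
    ae_of_all _ fun rx ↦ (one_le_sum_singleton (pol rx.2)).trans_eq (bellmanTarget_univ rx).symm
  filter_upwards [ae_isProbabilityMeasure_of_bind hone] with rx hrx
  rw [← bellmanTarget_univ (γ := γ) (η := η) rx, hrx.measure_univ]

lemma isProbabilityMeasure_bellmanOp [IsProbabilityMeasure (p xa)]
    [∀ xa, IsProbabilityMeasure (η xa)] (h : ∀ᵐ rx ∂p xa, ∑ a', pol rx.2 {a'} = 1)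
    (hη : bellmanOp γ p pol η xa ≠ 0) : IsProbabilityMeasure (bellmanOp γ p pol η xa) :=
  isProbabilityMeasure_bind_of_ae (aemeasurable_of_bind_ne_zero hη)
    (h.mono fun _ ↦ isProbabilityMeasure_bellmanTarget)

lemma cramerSqDist_bellmanOp_le (hγ : 0 ≤ γ) [IsProbabilityMeasure (p xa)]
    [∀ xa, IsProbabilityMeasure (η xa)] [∀ xa, IsProbabilityMeasure (η' xa)]
    (h : ∀ᵐ rx ∂p xa, ∑ a', pol rx.2 {a'} = 1)
    (hη : bellmanOp γ p pol η xa ≠ 0) (hη' : bellmanOp γ p pol η' xa ≠ 0) :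
    cramerSqDist (bellmanOp γ p pol η xa) (bellmanOp γ p pol η' xa) ≤
      ENNReal.ofReal γ * ⨆ xa, cramerSqDist (η xa) (η' xa) :=
  calc _ ≤ ∫⁻ rx, cramerSqDist (bellmanTarget γ pol η rx) (bellmanTarget γ pol η' rx) ∂p xa :=
        cramerSqDist_bind_le (aemeasurable_of_bind_ne_zero hη) (aemeasurable_of_bind_ne_zero hη')
          (h.mono fun _ ↦ isProbabilityMeasure_bellmanTarget)
          (h.mono fun _ ↦ isProbabilityMeasure_bellmanTarget)
    _ ≤ ∫⁻ _, ENNReal.ofReal γ * ⨆ xa, cramerSqDist (η xa) (η' xa) ∂p xa :=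
        lintegral_mono_ae (h.mono fun rx ↦ cramerSqDist_bellmanTarget_le hγ)
    _ = _ := by simp

lemma cramerSqDist_cramerProj_bellmanOp_le (hγ : 0 ≤ γ) {K : ℕ} {z : ℕ → ℝ} (hK : 2 ≤ K)
    (hz : StrictMonoOn z (Iio K)) {δ : ℝ} (hδ : ∀ i, i + 1 < K → z (i + 1) - z i ≤ δ)
    [IsProbabilityMeasure (p xa)] [∀ x, IsProbabilityMeasure (pol x)]
    [∀ xa, IsProbabilityMeasure (η xa)] [∀ xa, IsProbabilityMeasure (η' xa)]
    (hη : bellmanOp γ p pol η xa ≠ 0) (hη' : bellmanOp γ p pol η' xa = η' xa)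
    (hsupp : η' xa (Icc (z 0) (z (K - 1)))ᶜ = 0) :
    cramerSqDist (cramerProj K z (bellmanOp γ p pol η xa)) (η' xa) ≠ ∞ ∧
      cramerSqDist (cramerProj K z (bellmanOp γ p pol η xa)) (η' xa) ≤
        ENNReal.ofReal γ * (⨆ xa, cramerSqDist (η xa) (η' xa)) + ENNReal.ofReal (δ / 4) := by
  have hTη' : IsProbabilityMeasure (bellmanOp γ p pol η' xa) := by rw [hη']; infer_instance
  have hpol : ∀ᵐ rx ∂p xa, ∑ a', pol rx.2 {a'} = 1 := ae_sum_policy_eq_one (γ := γ) (η := η')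
  have hTη := isProbabilityMeasure_bellmanOp hpol hη
  refine ⟨cramerSqDist_cramerProj_ne_top hK hz hsupp,
    (cramerSqDist_cramerProj_le hK hz hδ hsupp).trans ?_⟩
  gcongr
  exact hη' ▸ cramerSqDist_bellmanOp_le hγ hpol hη hTη'.ne_zero

end Bellman

lemma toReal_le_div_of_le_ofReal_mul_add {D : ℝ≥0∞} (hD : D ≠ ∞) {γ b : ℝ} (hγ₀ : 0 ≤ γ)
    (hγ₁ : γ < 1) (hb : 0 ≤ b) (h : D ≤ ENNReal.ofReal γ * D + ENNReal.ofReal b) :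
    D.toReal ≤ b / (1 - γ) := by
  have hreal := ENNReal.toReal_mono (by finiteness) h
  rw [ENNReal.toReal_add (by finiteness) (by finiteness), ENNReal.toReal_mul,
    ENNReal.toReal_ofReal hγ₀, ENNReal.toReal_ofReal hb] at hreal
  rw [le_div_iff₀ (sub_pos.2 hγ₁)]
  linarith

lemma cramerProj_zero (K : ℕ) (z : ℕ → ℝ) : cramerProj K z 0 = 0 := by
  simp [cramerProj]

lemma supCramer_sq_le {X A : Type} [Fintype X] [Fintype A] [Nonempty X] [Nonempty A]
    {η η' : X × A → Measure ℝ} {B : ℝ} (h : ∀ xa, cramerDist (η xa) (η' xa) ^ 2 ≤ B) :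
    supCramer η η' ^ 2 ≤ B := by
  obtain ⟨xa, hxa⟩ := exists_eq_ciSup_of_finite (f := fun xa ↦ cramerDist (η xa) (η' xa))
  rw [supCramer, ← hxa]
  exact h xa

theorem cramerDist_fixedPoint_bound_general
    {X A : Type} [Fintype X] [Fintype A] [Nonempty X] [Nonempty A]
    [MeasurableSpace X] [MeasurableSpace A]
    (γ : ℝ) (hγ0 : 0 ≤ γ) (hγ1 : γ < 1)
    (p : X × A → Measure (ℝ × X)) (hp : ∀ xa, IsProbabilityMeasure (p xa))
    (pol : X → Measure A) (hpol : ∀ x, IsProbabilityMeasure (pol x))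
    (K : ℕ) (hK : 2 ≤ K) (z : ℕ → ℝ) (hz : ∀ i, i + 1 < K → z i < z (i + 1))
    (ηC : X × A → Measure ℝ) (hηCprob : ∀ xa, IsProbabilityMeasure (ηC xa))
    (hηCfix : ∀ xa, cramerProj K z (bellmanOp γ p pol ηC xa) = ηC xa)
    (ηπ : X × A → Measure ℝ) (hηπprob : ∀ xa, IsProbabilityMeasure (ηπ xa))
    (hηπfix : ∀ xa, bellmanOp γ p pol ηπ xa = ηπ xa)
    (hηπsupp : ∀ xa, ηπ xa (Icc (z 0) (z (K - 1)))ᶜ = 0) :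
    (supCramer ηC ηπ) ^ 2 ≤ (1 / (4 * (1 - γ))) * ⨆ i : Fin (K - 1), (z (i.1 + 1) - z i.1) := by
  have hmono : StrictMonoOn z (Iio K) :=
    strictMonoOn_of_lt_add_one ordConnected_Iio fun i _ _ hi ↦ hz i hi
  set δ := ⨆ i : Fin (K - 1), (z (i.1 + 1) - z i.1)
  set D := ⨆ xa, cramerSqDist (ηC xa) (ηπ xa)
  have hδ (i : ℕ) (hi : i + 1 < K) : z (i + 1) - z i ≤ δ :=
    le_ciSup (f := fun i : Fin (K - 1) ↦ z (i.1 + 1) - z i.1) (finite_range _).bddAbove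
      ⟨i, by omega⟩
  have hδ₀ : 0 ≤ δ := (sub_pos.2 (hz 0 (by omega))).le.trans (hδ 0 (by omega))
  have hT (xa) : bellmanOp γ p pol ηC xa ≠ 0 := fun h ↦
    IsProbabilityMeasure.ne_zero (ηC xa) (by rw [← hηCfix, h, cramerProj_zero])
  have hstep (xa) : cramerSqDist (ηC xa) (ηπ xa) ≠ ∞ ∧
      cramerSqDist (ηC xa) (ηπ xa) ≤ ENNReal.ofReal γ * D + ENNReal.ofReal (δ / 4) := by
    simpa only [hηCfix] using cramerSqDist_cramerProj_bellmanOp_le hγ0 hK hmono hδ (hT xa)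
      (hηπfix xa) (hηπsupp xa)
  have hD : D ≠ ∞ := iSup_ne_top fun xa ↦ (hstep xa).1
  refine supCramer_sq_le fun xa ↦ ?_
  calc cramerDist (ηC xa) (ηπ xa) ^ 2 = (cramerSqDist (ηC xa) (ηπ xa)).toReal := cramerDist_sq _ _
    _ ≤ D.toReal := ENNReal.toReal_mono hD (le_iSup (fun xa ↦ cramerSqDist (ηC xa) (ηπ xa)) xa)
    _ ≤ δ / 4 / (1 - γ) := toReal_le_div_of_le_ofReal_mul_add hD hγ0 hγ1 (by positivity)
        (iSup_le fun xa ↦ (hstep xa).2)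
    _ = 1 / (4 * (1 - γ)) * δ := by rw [div_div, one_div_mul_eq_div]

/-- Approximation error bound for the fixed point of the projected
Bellman operator, when the true return distributions are supported on [z₁, z_K]. -/
theorem cramerDist_fixedPoint_bound
    {X A : Type} [Fintype X] [Fintype A] [Nonempty X] [Nonempty A]
    [MeasurableSpace X] [MeasurableSpace A]
    (γ : ℝ) (hγ0 : 0 ≤ γ) (hγ1 : γ < 1)
    (p : X × A → Measure (ℝ × X)) (hp : ∀ xa, IsProbabilityMeasure (p xa))
    (pol : X → Measure A) (hpol : ∀ x, IsProbabilityMeasure (pol x))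
    (K : ℕ) (hK : 2 ≤ K) (z : ℕ → ℝ) (hz : ∀ i, i + 1 < K → z i < z (i + 1))
    -- η_C : the unique fixed point of Π_C T^π, supported on the grid
    (ηC : X × A → Measure ℝ) (hηCprob : ∀ xa, IsProbabilityMeasure (ηC xa))
    (hηCsupp : ∀ xa, ηC xa {w | ∃ i < K, w = z i}ᶜ = 0)
    (hηCfix : ∀ xa, cramerProj K z (bellmanOp γ p pol ηC xa) = ηC xa)
    -- η_π : the true return distribution function, a fixed point of T^π
    (ηπ : X × A → Measure ℝ) (hηπprob : ∀ xa, IsProbabilityMeasure (ηπ xa))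
    (hηπfix : ∀ xa, bellmanOp γ p pol ηπ xa = ηπ xa)
    (hηπsupp : ∀ xa, ηπ xa (Set.Icc (z 0) (z (K - 1)))ᶜ = 0) :
    (supCramer ηC ηπ) ^ 2 ≤ (1 / (1 - γ)) * ⨆ i : Fin (K - 1), (z (i.1 + 1) - z i.1) := by
  refine (cramerDist_fixedPoint_bound_general γ hγ0 hγ1 p hp pol hpol K hK z hz ηC hηCprob hηCfix
    ηπ hηπprob hηπfix hηπsupp).trans ?_
  gcongr
  · exact Real.iSup_nonneg fun i ↦ (sub_pos.2 (hz i (by omega))).le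
  linarith

end
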